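/- Let $X$ and $Y$ be standard Borel spaces and let $M, N$ be probability measures on $X \times Y$. Write the disintegrations with respect to the projection onto $X$ as $M(dx,dy) = M_X(dx)\, M_{Y\mid X}(x, dy)$ and $N(dx,dy) = N_X(dx)\, N_{Y\mid X}(x, dy)$, where $M_X, N_X$ are the pushforwards onto $X$ and $M_{Y\mid X}, N_{Y\mid X}$ are the conditional kernels. Assume $M_X$ and $N_X$ are mutually absolutely continuous. Then $M$ is mutually singular to $N$ if and only if $M_{Y\mid X}(x, \cdot)$ is mutually singular to $N_{Y\mid X}(x, \cdot)$ for $M_X$-almost every $x$. -/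

import Mathlib

/-! By disintegration `M = M.fst ⊗ₘ M.condKernel` and `N = N.fst ⊗ₘ N.condKernel`. Since
`M.fst ≪ N.fst ≪ M.fst`, the null sets of `N` are those of `M.fst ⊗ₘ N.condKernel`, so `N` may be
replaced by the latter measure. With a common first marginal, mutual singularity of the two
composition products is mutual singularity of the kernels almost everywhere:
`Measure.mutuallySingular_compProd_right_iff`, which rests on a jointly measurable choice of
separating sets and hence on the countable generation of the σ-algebra of `Y`. -/

open MeasureTheory ProbabilityTheory

noncomputable section

/-- Let `M, N` be probability measures on a product `X × Y` of standard Borel spaces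
with mutually absolutely continuous first marginals.  Then `M ⟂ₘ N` if and only if for `M`-first-
marginal-almost every `x` the conditional measures `M.condKernel x` and `N.condKernel x` are
mutually singular. -/
theorem mutuallySingular_iff_ae_condKernel_mutuallySingular
    {X Y : Type*} [MeasurableSpace X] [StandardBorelSpace X]
    [MeasurableSpace Y] [StandardBorelSpace Y] [Nonempty Y]
    (M N : Measure (X × Y)) [IsProbabilityMeasure M] [IsProbabilityMeasure N]
    (h₁ : M.fst ≪ N.fst) (h₂ : N.fst ≪ M.fst) :
    M ⟂ₘ N ↔ ∀ᵐ x ∂M.fst, M.condKernel x ⟂ₘ N.condKernel x := by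
  nth_rw 1 [← M.disintegrate M.condKernel, ← N.disintegrate N.condKernel]
  rw [← Measure.mutuallySingular_compProd_right_iff]
  exact ⟨fun h => h.mono_ac .rfl (h₁.compProd_left N.condKernel),
    fun h => h.mono_ac .rfl (h₂.compProd_left N.condKernel)⟩
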